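/- Let P(m,U) be a pliable-index-coding problem and let L be the maximum length of any nested chain H_1 ⊊ H_2 ⊊ … ⊊ H_L of absent receivers of P(m,U). Then for every field size q, β_q(P(m,U)) ≥ m − L. -/

import Mathlib

/-!
The bound follows from a decoding-chain argument. Grow a set `H` of known messages from `∅` to
everything: if `H` is a present receiver, it decodes a new message from the codeword, which is added
to `H`; if `H` is absent, a genie reveals an arbitrary message outside `H`. The absent sets met on
the way form a nested chain, so the genie reveals at most `L` messages. The codeword together with
the revealed messages determines all `m` messages, so the map `x ↦ (E x, x_G)` is injective, and
counting with `q = |F|` gives `q ^ m ≤ q ^ ℓ * q ^ |G|`, where `|G| ≤ L`. Hence `m ≤ ℓ + L`.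
The chain is built in `exists_chain_and_genie`, and `le_length_add_card` is the counting step.
-/

/-- `E` is a valid pliable index code for the problem with `m` messages over the field `F`
and receiver set `U`: every present receiver `H ∈ U` can decode some message `Xᵢ` with
`i ∉ H` from the codeword and its side information `X_H`. The codeword coordinates are
indexed by an arbitrary type `ι`. -/
def IsPliableCode (F : Type) [Field F] {m : ℕ} (U : Set (Set (Fin m)))
    {ι : Type} (E : (Fin m → F) → ι → F) : Prop :=
  ∀ H ∈ U, ∃ i : Fin m, i ∉ H ∧ ∃ dec : (ι → F) → (H → F) → F,
    ∀ x : Fin m → F, dec (E x) (fun j => x j.1) = x i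

/-- `β_q(P(m,U))`: the minimum length `ℓ` of a pliable index code for the problem. -/
noncomputable def pliableRate (F : Type) [Field F] (m : ℕ)
    (U : Set (Set (Fin m))) : ℕ :=
  sInf {ℓ : ℕ | ∃ E : (Fin m → F) → Fin ℓ → F, IsPliableCode F U E}

/-- The decoding chain started at `H`: `Hs` lists the absent receivers met, and `G` is the set of
messages the genie reveals, at most one for each of them. The codeword, the messages in `H` and
those in `G` together determine every message. -/
theorem exists_chain_and_genie {F : Type} [Field F] {m : ℕ} {U : Set (Set (Fin m))}
    {ι : Type} {E : (Fin m → F) → ι → F} (hE : IsPliableCode F U E) (H : Set (Fin m)) :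
    ∃ (n : ℕ) (Hs : Fin n → Set (Fin m)) (G : Finset (Fin m)),
      StrictMono Hs ∧ (∀ k, H ⊆ Hs k ∧ Hs k ≠ Set.univ ∧ Hs k ∉ U) ∧ G.card ≤ n ∧
      ∀ x y : Fin m → F, E x = E y → (∀ j ∈ H, x j = y j) → (∀ j ∈ G, x j = y j) → x = y := by
  induction H using WellFoundedGT.induction with
  | ind H ih =>
  by_cases hH : H = Set.univ
  · subst hH
    exact ⟨0, Fin.elim0, ∅, fun k => k.elim0, fun k => k.elim0, by simp,
      fun x y _ h _ => funext fun j => h j trivial⟩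
  by_cases hU : H ∈ U
  · obtain ⟨i, hi, dec, hdec⟩ := hE H hU
    obtain ⟨n, Hs, G, hmono, hHs, hG, hdet⟩ := ih (insert i H) (Set.ssubset_insert hi)
    refine ⟨n, Hs, G, hmono,
      fun k => ⟨(Set.subset_insert i H).trans (hHs k).1, (hHs k).2⟩, hG, ?_⟩
    intro x y hxy hHxy hGxy
    refine hdet x y hxy ?_ hGxy
    rintro j (rfl | hj)
    · have hside : (fun k : H => x k.1) = fun k : H => y k.1 := funext fun k => hHxy k.1 k.2
      rw [← hdec x, ← hdec y, hxy, hside]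
    · exact hHxy j hj
  · obtain ⟨i, hi⟩ := (Set.ne_univ_iff_exists_notMem H).1 hH
    obtain ⟨n, Hs, G, hmono, hHs, hG, hdet⟩ := ih (insert i H) (Set.ssubset_insert hi)
    refine ⟨n + 1, Fin.cons H Hs, insert i G, ?_, ?_,
      (Finset.card_insert_le i G).trans (by lia), ?_⟩
    · intro a b hab
      cases b using Fin.cases with
      | zero => exact absurd hab (Fin.not_lt_zero a)
      | succ b =>
        cases a using Fin.cases with
        | zero =>
          simp only [Fin.cons_zero, Fin.cons_succ]
          exact (Set.ssubset_insert hi).trans_subset (hHs b).1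
        | succ a =>
          simp only [Fin.cons_succ]
          exact hmono (Fin.succ_lt_succ_iff.1 hab)
    · intro k
      cases k using Fin.cases with
      | zero => exact ⟨subset_rfl, hH, hU⟩
      | succ k => exact ⟨(Set.subset_insert i H).trans (hHs k).1, (hHs k).2⟩
    · intro x y hxy hHxy hGxy
      refine hdet x y hxy ?_ fun j hj => hGxy j (Finset.mem_insert_of_mem hj)
      rintro j (rfl | hj)
      · exact hGxy j (Finset.mem_insert_self j G)
      · exact hHxy j hj

theorem le_length_add_card {F : Type} [Field F] [Fintype F] {m l : ℕ}
    (E : (Fin m → F) → Fin l → F) (G : Finset (Fin m))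
    (hdet : ∀ x y : Fin m → F, E x = E y → (∀ j ∈ G, x j = y j) → x = y) :
    m ≤ l + G.card := by
  classical
  have hinj : Function.Injective
      (fun x : Fin m → F => ((E x, fun j : G => x j.1) : (Fin l → F) × (G → F))) := by
    intro x y h
    obtain ⟨h1, h2⟩ := Prod.mk.inj h
    exact hdet x y h1 fun j hj => congrFun h2 ⟨j, hj⟩
  have hcard := Fintype.card_le_of_injective _ hinj
  simp only [Fintype.card_prod, Fintype.card_fun, Fintype.card_fin, Fintype.card_coe,
    ← pow_add] at hcard
  exact (Nat.pow_le_pow_iff_right Fintype.one_lt_card).1 hcard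

/-- if L is the maximum length of any nested chain H_1 ⊊ … ⊊ H_L of absent
receivers (i.e. proper subsets of [1:m] not in U), then β_q(P(m,U)) ≥ m − L. -/
theorem pliableRate_ge_sub_max_nested_chain
    (F : Type) [Field F] [Fintype F] (m L : ℕ) (U : Set (Set (Fin m)))
    (hU : ∀ H ∈ U, H ≠ Set.univ)
    (hex : ∃ Hs : Fin L → Set (Fin m), StrictMono Hs ∧
      ∀ i : Fin L, Hs i ≠ Set.univ ∧ Hs i ∉ U)
    (hmax : ¬ ∃ Hs : Fin (L + 1) → Set (Fin m), StrictMono Hs ∧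
      ∀ i : Fin (L + 1), Hs i ≠ Set.univ ∧ Hs i ∉ U) :
    m - L ≤ pliableRate F m U := by
  -- Sending all messages uncoded shows that codes exist, so the infimum is attained rather than
  -- being the junk value `sInf ∅ = 0`.
  have hne : {ℓ : ℕ | ∃ E : (Fin m → F) → Fin ℓ → F, IsPliableCode F U E}.Nonempty := by
    refine ⟨m, id, fun H hH => ?_⟩
    obtain ⟨i, hi⟩ := (Set.ne_univ_iff_exists_notMem H).1 (hU H hH)
    exact ⟨i, hi, fun c _ => c i, fun x => rfl⟩
  obtain ⟨E, hE⟩ := Nat.sInf_mem hne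
  change m - L ≤ sInf {ℓ : ℕ | ∃ E : (Fin m → F) → Fin ℓ → F, IsPliableCode F U E}
  obtain ⟨n, Hs, G, hmono, hHs, hG, hdet⟩ := exists_chain_and_genie hE ∅
  have hn : n ≤ L := by
    by_contra! h
    exact hmax ⟨fun k => Hs (Fin.castLE h k), hmono.comp (Fin.strictMono_castLE h),
      fun k => (hHs _).2⟩
  have := le_length_add_card E G fun x y hxy hGxy =>
    hdet x y hxy (fun j hj => absurd hj (Set.notMem_empty j)) hGxy
  lia
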